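/- Let 𝕄 = 𝕄* be a bounded self-adjoint operator on a Hilbert space H = H₁ ⊕ H₂ with block decomposition 𝕄^{(αβ)} (α,β ∈ {1,2}), and suppose 𝕄^{(11)} ≤ m₁ and 𝕄^{(22)} ≤ m₂ with m₂ < m₁ (as quadratic-form inequalities). Then the top of the spectrum of 𝕄 satisfies λ_max(𝕄) ≤ m₁ + ‖𝕄^{(12)}‖² / |m₂ − m₁|. -/

import Mathlib

open scoped InnerProductSpace

/-- Proposition 4.2 of the paper: let `𝕄 = 𝕄*` be a bounded
self-adjoint operator on a Hilbert space `H = H₁ ⊕ H₂` (the decomposition given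
by complementary orthogonal projections `P₁, P₂`), with blocks
`𝕄^{(αβ)} = P_α 𝕄 P_β`. If `𝕄^{(11)} ≤ m₁` and `𝕄^{(22)} ≤ m₂` as quadratic
forms with `m₂ < m₁`, then the top of the spectrum of `𝕄` satisfies
`λ_max(𝕄) ≤ m₁ + ‖𝕄^{(12)}‖² / |m₂ - m₁|`. -/
theorem block_operator_spectrum_bound
    {H : Type*} [NormedAddCommGroup H] [InnerProductSpace ℂ H] [CompleteSpace H]
    (M : H →L[ℂ] H) (hM : IsSelfAdjoint M)
    (P₁ P₂ : H →L[ℂ] H)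
    (hP₁proj : P₁ ∘L P₁ = P₁) (hP₂proj : P₂ ∘L P₂ = P₂)
    (hP₁sa : IsSelfAdjoint P₁) (hP₂sa : IsSelfAdjoint P₂)
    (hPsum : P₁ + P₂ = 1)
    (m₁ m₂ : ℝ) (hm : m₂ < m₁)
    (h11 : ∀ x : H, P₁ x = x → (⟪M x, x⟫_ℂ).re ≤ m₁ * ‖x‖ ^ 2)
    (h22 : ∀ x : H, P₂ x = x → (⟪M x, x⟫_ℂ).re ≤ m₂ * ‖x‖ ^ 2) :
    ∀ μ ∈ spectrum ℂ M, μ.re ≤ m₁ + ‖P₁ ∘L M ∘L P₂‖ ^ 2 / |m₂ - m₁| := by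
  intro μ hμ
  set N := ‖P₁ ∘L M ∘L P₂‖ with hN
  set C : ℝ := m₁ + N ^ 2 / |m₂ - m₁| with hC
  have hd : 0 < m₁ - m₂ := by linarith
  have habs : |m₂ - m₁| = m₁ - m₂ := by rw [abs_sub_comm]; exact abs_of_pos hd
  have symM : ∀ x y : H, ⟪M x, y⟫_ℂ = ⟪x, M y⟫_ℂ := fun x y =>
    (ContinuousLinearMap.isSelfAdjoint_iff_isSymmetric.mp hM) x y
  have symP : ∀ x y : H, ⟪P₁ x, y⟫_ℂ = ⟪x, P₁ y⟫_ℂ := fun x y =>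
    (ContinuousLinearMap.isSelfAdjoint_iff_isSymmetric.mp hP₁sa) x y
  have p1 : ∀ x, P₁ (P₁ x) = P₁ x := fun x => DFunLike.congr_fun hP₁proj x
  have p2 : ∀ x, P₂ (P₂ x) = P₂ x := fun x => DFunLike.congr_fun hP₂proj x
  have hs : ∀ x, P₁ x + P₂ x = x := fun x => DFunLike.congr_fun hPsum x
  have p12 : ∀ x, P₁ (P₂ x) = 0 := fun x => by
    have := hs (P₂ x)
    rw [p2] at this
    simpa using this
  have form : ∀ x : H, (⟪M x, x⟫_ℂ).re ≤ C * ‖x‖ ^ 2 := by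
    intro x
    obtain ⟨u, hu⟩ : ∃ u, u = P₁ x := ⟨_, rfl⟩
    obtain ⟨v, hv⟩ : ∃ v, v = P₂ x := ⟨_, rfl⟩
    have hu1 : P₁ u = u := by rw [hu, p1]
    have hv2 : P₂ v = v := by rw [hv, p2]
    have hx : x = u + v := by rw [hu, hv, hs]
    have horth : ⟪u, v⟫_ℂ = 0 := by
      rw [← hu1, symP, hv, p12, inner_zero_right]
    have hnorm : ‖x‖ ^ 2 = ‖u‖ ^ 2 + ‖v‖ ^ 2 := by
      rw [hx, sq, sq, sq]
      exact norm_add_sq_eq_norm_sq_add_norm_sq_of_inner_eq_zero u v horth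
    have hc : (⟪M v, u⟫_ℂ).re ≤ N * ‖v‖ * ‖u‖ := by
      have e : ⟪M v, u⟫_ℂ = ⟪(P₁ ∘L M ∘L P₂) v, u⟫_ℂ := by
        simp only [ContinuousLinearMap.comp_apply]
        rw [symP, hu1, hv2]
      rw [e]
      calc _ ≤ ‖(P₁ ∘L M ∘L P₂) v‖ * ‖u‖ := re_inner_le_norm (𝕜 := ℂ) _ _
        _ ≤ _ := by
          gcongr
          exact ContinuousLinearMap.le_opNorm _ _
    have hc' : (⟪M u, v⟫_ℂ).re = (⟪M v, u⟫_ℂ).re := by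
      rw [symM u v]
      exact inner_re_symm (𝕜 := ℂ) _ _
    have e : (⟪M x, x⟫_ℂ).re = (⟪M u, u⟫_ℂ).re + (⟪M v, v⟫_ℂ).re + 2 * (⟪M v, u⟫_ℂ).re := by
      rw [hx, map_add, inner_add_left, inner_add_right, inner_add_right]
      simp only [Complex.add_re]
      rw [hc']; ring
    have h1 := h11 u hu1
    have h2 := h22 v hv2
    rw [e, hnorm, hC, habs]
    have key : 0 ≤ (N * ‖u‖ - (m₁ - m₂) * ‖v‖) ^ 2 / (m₁ - m₂) + N ^ 2 / (m₁ - m₂) * ‖v‖ ^ 2 := by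
      positivity
    have key2 : (N * ‖u‖ - (m₁ - m₂) * ‖v‖) ^ 2 / (m₁ - m₂) =
        N ^ 2 / (m₁ - m₂) * ‖u‖ ^ 2 - 2 * (N * ‖v‖ * ‖u‖) + (m₁ - m₂) * ‖v‖ ^ 2 := by
      field_simp
      ring
    rw [key2] at key
    linarith
  have hle : M ≤ algebraMap ℝ (H →L[ℂ] H) C := by
    rw [ContinuousLinearMap.le_def, ContinuousLinearMap.isPositive_def']
    refine ⟨(IsSelfAdjoint.algebraMap _ (IsSelfAdjoint.all C)).sub hM, fun x => ?_⟩
    rw [ContinuousLinearMap.reApplyInnerSelf_apply, Algebra.algebraMap_eq_smul_one]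
    have h := form x
    have e : (⟪C • x, x⟫_ℂ).re = C * ‖x‖ ^ 2 := by
      rw [inner_smul_left_eq_smul, inner_self_eq_norm_sq_to_K]
      simp [← Complex.ofReal_pow]
    simp only [sub_apply, smul_apply, ContinuousLinearMap.one_apply, inner_sub_left]
    change 0 ≤ (_ - _ : ℂ).re
    rw [Complex.sub_re, e]
    linarith
  have hre := hM.mem_spectrum_eq_re hμ
  refine (le_algebraMap_iff_spectrum_le (a := M) hM).1 hle μ.re ?_
  rw [← spectrum.algebraMap_mem_iff ℂ]
  rw [hre] at hμ
  exact hμ
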